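/- arXiv:2104.05455 — 2 statements merged into one kernel-verified Lean document; each statement's English description precedes it below -/
import Mathlib

section
/- Let K be a field, Y = (Y_1,…,Y_s) a tuple of variables, p a non-maximal prime ideal of K[Y], S a set of monomials in Y of degree ≤ D containing 1, and R(Y) ∈ K[Y]. If each variable Y_1,…,Y_s belongs to S ∪ {R(Y)}, then the triple (p,S,R) satisfies hypothesis (H). -/
open MvPolynomial

noncomputable section

/-- The rational function field `K(T)` with variables indexed by `ι`,
realized as the fraction field of the polynomial ring. -/
abbrev RatFuncField (K : Type) [Field K] (ι : Type) : Type := FractionRing (MvPolynomial ι K)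

/-- `x ∈ K(T)` can be specialized at `t ∈ K^ι` with value `v`:
there is a representation `x = a/b` with `b(t) ≠ 0` and `v = a(t)/b(t)`. -/
def RatSpecializesTo (K : Type) [Field K] {ι : Type} (t : ι → K)
    (x : RatFuncField K ι) (v : K) : Prop :=
  ∃ a b : MvPolynomial ι K, MvPolynomial.eval t b ≠ 0 ∧
    algebraMap (MvPolynomial ι K) (RatFuncField K ι) b * x
      = algebraMap (MvPolynomial ι K) (RatFuncField K ι) a ∧
    MvPolynomial.eval t b * v = MvPolynomial.eval t a

/-- `P ∈ K(T)[Y]` specializes at `t` (coefficientwise) to `q ∈ K[Y]`. -/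
def PolySpecializesTo (K : Type) [Field K] {ι : Type} {s : ℕ} (t : ι → K)
    (P : MvPolynomial (Fin s) (RatFuncField K ι)) (q : MvPolynomial (Fin s) K) : Prop :=
  ∀ mono : Fin s →₀ ℕ, RatSpecializesTo K t (P.coeff mono) (q.coeff mono)

/-- `H` is a Hilbert subset of `K^ι`: the set of points where finitely many irreducible
polynomials of `K(T)[Y]` specialize to irreducible polynomials of `K[Y]`, intersected
with a nonempty Zariski-open subset. -/
def IsHilbertSubset (K : Type) [Field K] (ι : Type) (H : Set (ι → K)) : Prop :=
  ∃ (s l n : ℕ) (p : Fin l → MvPolynomial (Fin s) (RatFuncField K ι))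
    (g : Fin n → MvPolynomial ι K),
    (∀ i, Irreducible (p i)) ∧
    (∃ t : ι → K, ∃ j, MvPolynomial.eval t (g j) ≠ 0) ∧
    H = {t | (∃ j, MvPolynomial.eval t (g j) ≠ 0) ∧
      ∀ i, ∃ q : MvPolynomial (Fin s) K, PolySpecializesTo K t (p i) q ∧ Irreducible q}

/-- A subset of `K^ι` is Zariski-dense iff for every nonzero polynomial `g` it contains a
point where `g` does not vanish. -/
def IsZariskiDense (K : Type) [Field K] {ι : Type} (S : Set (ι → K)) : Prop :=
  ∀ g : MvPolynomial ι K, g ≠ 0 → ∃ t ∈ S, MvPolynomial.eval t g ≠ 0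

/-- A field is Hilbertian if all its Hilbert subsets (of all `K^r`, `r ≥ 1`) are
Zariski-dense. -/
def IsHilbertianField (K : Type) [Field K] : Prop :=
  ∀ r : ℕ, 0 < r → ∀ H : Set (Fin r → K), IsHilbertSubset K (Fin r) H → IsZariskiDense K H

/-- The canonical ring homomorphism `K[T,Y] → K(T)[Y]`. -/
def extHom (K : Type) [Field K] (r s : ℕ) :
    MvPolynomial (Fin r ⊕ Fin s) K →+* MvPolynomial (Fin s) (RatFuncField K (Fin r)) :=
  MvPolynomial.eval₂Hom
    ((MvPolynomial.C).comp
      ((algebraMap (MvPolynomial (Fin r) K) (RatFuncField K (Fin r))).comp MvPolynomial.C))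
    (Sum.elim
      (fun i => MvPolynomial.C
        (algebraMap (MvPolynomial (Fin r) K) (RatFuncField K (Fin r)) (MvPolynomial.X i)))
      (fun j => MvPolynomial.X j))

/-- The specialization homomorphism `K[T,Y] → K[Y]`, `T ↦ t`. -/
def specHom (K : Type) [Field K] {r s : ℕ} (t : Fin r → K) :
    MvPolynomial (Fin r ⊕ Fin s) K →+* MvPolynomial (Fin s) K :=
  MvPolynomial.eval₂Hom MvPolynomial.C
    (Sum.elim (fun i => MvPolynomial.C (t i)) (fun j => MvPolynomial.X j))

/-- `L` is a separable extension of `F` in the general sense (equivalently, `L` is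
linearly disjoint from the perfect closure of `F`, equivalently `L ⊗_F F̄` is reduced);
the extension is given by the ring homomorphism `f : F → L`. -/
def IsSepExtOfHom (F L : Type) [Field F] [CommRing L] (f : F →+* L) : Prop :=
  letI : Algebra F L := f.toAlgebra
  IsReduced (TensorProduct F (AlgebraicClosure F) L)

/-- `Frac(A)` is a separable extension of `F` in the general sense. -/
def IsSepOverBase (F : Type) [Field F] (A : Type) [CommRing A] [Algebra F A] : Prop :=
  IsSepExtOfHom F (FractionRing A) ((algebraMap A (FractionRing A)).comp (algebraMap F A))

/-- The height of an ideal: the infimum over primes containing it of the lengths of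
chains of primes below.  For a prime ideal this is the usual height. -/
def idealHeight {R : Type} [CommRing R] (I : Ideal R) : ℕ∞ :=
  ⨅ p : {q : PrimeSpectrum R // I ≤ q.asIdeal}, Order.height p.1

/-- The monomials in `s` variables of total degree at most `D`. -/
def MonLE (s D : ℕ) : Type := {m : Fin s →₀ ℕ // m.degree ≤ D}

noncomputable instance (s D : ℕ) : Fintype (MonLE s D) :=
  (Finsupp.finite_of_degree_le D).fintype

/-- The generic polynomial of degree `D`, with parameter variables `v m`, `m` a monomial of
degree at most `D`, as an element of `K[Λ][Y]`. -/
def genPoly (K : Type) [Field K] (s D : ℕ) {Λ : Type} (v : MonLE s D → Λ) :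
    MvPolynomial (Fin s) (MvPolynomial Λ K) :=
  ∑ m : MonLE s D, MvPolynomial.monomial m.1 (MvPolynomial.X (v m))

/-- The generic polynomial of degree `D` specialized at `lam ∈ K^{N_D}`. -/
def genPolyAt (K : Type) [Field K] (s D : ℕ) (lam : MonLE s D → K) :
    MvPolynomial (Fin s) K :=
  ∑ m : MonLE s D, MvPolynomial.monomial m.1 (lam m)

/-- Substitution `T_i ↦ U_i(Y)` as a ring homomorphism `K[T,Y] → K[Y]`. -/
def polySubstHom (K : Type) [Field K] {r s : ℕ} (U : Fin r → MvPolynomial (Fin s) K) :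
    MvPolynomial (Fin r ⊕ Fin s) K →+* MvPolynomial (Fin s) K :=
  MvPolynomial.eval₂Hom MvPolynomial.C (Sum.elim U (fun j => MvPolynomial.X j))

/-- The quasi-generic polynomial `Q_{S,R}(Λ,Y) = ∑_i Λ_i Q_i(Y) + R(Y)` of base `(S,R)`,
where `S = {monomial (m 0), …, monomial (m n)}`, as an element of `K[Λ][Y]`. -/
def quasiGen (K : Type) [Field K] {s n : ℕ} (m : Fin (n + 1) → (Fin s →₀ ℕ))
    (R : MvPolynomial (Fin s) K) :
    MvPolynomial (Fin s) (MvPolynomial (Fin (n + 1)) K) :=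
  (∑ i, MvPolynomial.monomial (m i) (MvPolynomial.X i)) +
    MvPolynomial.map (MvPolynomial.C) R

/-- Hypothesis (H) for the triple `(p, S, R)` (with `S` the set of monomials
`monomial (m i)`, `m 0 = 0`): the map `φ_{S,R}` sending `(a_1,…,a_n)` to the class mod `E`
of `∑_{i ≥ 1} a_i Q_i(Y) + R(Y)` in `B/E` is not identically zero, where `B = K[Y]/p` and
`E ⊆ B` is the subfield of elements algebraic over `K`. -/
def HypothesisH (K : Type) [Field K] {s n : ℕ} (p : Ideal (MvPolynomial (Fin s) K))
    (m : Fin (n + 1) → (Fin s →₀ ℕ)) (R : MvPolynomial (Fin s) K) : Prop :=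
  ∃ a : Fin (n + 1) → K,
    Ideal.Quotient.mk p ((∑ i ∈ Finset.univ.erase 0, MvPolynomial.monomial (m i) (a i)) + R)
      ∉ integralClosure K (MvPolynomial (Fin s) K ⧸ p)

/-!
If all elements `a • Q + R` lie in the algebraic part `E` of `B = K[Y]/p`, then so do `R`
(take `a = 0`) and each `Q_i` (subtract `R` from the value at a basis vector). Since the `Q_i` and
`R` include all the variables, `E = B`, i.e. `B` is integral over `K`. A domain integral over a
field is a field, so this is impossible when `p` is prime and not maximal.
-/

lemma forall_sum_smul_add_mem_iff {A M ι : Type*} [Ring A] [AddCommGroup M] [Module A M]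
    (N : Submodule A M) (t : Finset ι) (v : ι → M) (w : M) :
    (∀ a : ι → A, ∑ i ∈ t, a i • v i + w ∈ N) ↔ w ∈ N ∧ ∀ i ∈ t, v i ∈ N := by
  classical
  constructor
  · intro h
    have hw : w ∈ N := by simpa using h 0
    refine ⟨hw, fun i hi ↦ ?_⟩
    have hvw : v i + w ∈ N := by simpa [Pi.single_apply, hi] using h (Pi.single i 1)
    exact (N.add_mem_iff_left hw).mp hvw
  · rintro ⟨hw, hv⟩ a
    exact N.add_mem (N.sum_mem fun i hi ↦ N.smul_mem _ (hv i hi)) hw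

lemma isIntegral_of_surjective_of_forall_isIntegral_X {A B σ : Type*} [CommRing A] [CommRing B]
    [Algebra A B] {f : MvPolynomial σ A →ₐ[A] B} (hf : Function.Surjective f)
    (hX : ∀ j, IsIntegral A (f (X j))) : Algebra.IsIntegral A B := by
  have htop : ⊤ ≤ (integralClosure A B).comap f := by
    rw [← adjoin_range_X, Algebra.adjoin_le_iff]
    exact Set.range_subset_iff.mpr hX
  exact ⟨hf.forall.mpr fun _ ↦ htop Algebra.mem_top⟩

lemma isMaximal_of_isIntegral_quotient (k : Type*) {A : Type*} [Field k] [CommRing A]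
    [Algebra k A] (p : Ideal A) [p.IsPrime] [Algebra.IsIntegral k (A ⧸ p)] : p.IsMaximal :=
  Ideal.Quotient.maximal_of_isField p (isField_of_isIntegral_of_isField' (Field.toIsField k))

lemma hypothesisH_iff {K : Type} [Field K] {s n : ℕ} {p : Ideal (MvPolynomial (Fin s) K)}
    {m : Fin (n + 1) → (Fin s →₀ ℕ)} {R : MvPolynomial (Fin s) K} :
    HypothesisH K p m R ↔ ¬ (IsIntegral K (Ideal.Quotient.mk p R) ∧
      ∀ i ≠ 0, IsIntegral K (Ideal.Quotient.mk p (monomial (m i) 1))) := by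
  have h := forall_sum_smul_add_mem_iff
    ((integralClosure K (MvPolynomial (Fin s) K ⧸ p)).comap (Ideal.Quotient.mkₐ K p)).toSubmodule
    (Finset.univ.erase 0) (fun i ↦ monomial (m i) 1) R
  simp only [smul_monomial, smul_eq_mul, mul_one, Subalgebra.mem_toSubmodule,
    Subalgebra.mem_comap, Ideal.Quotient.mkₐ_eq_mk, mem_integralClosure_iff, Finset.mem_erase,
    Finset.mem_univ, and_true] at h
  simp only [HypothesisH, mem_integralClosure_iff, ← h, not_forall]

theorem stmt_7_general {K : Type} [Field K] {s n : ℕ} {m : Fin (n + 1) → (Fin s →₀ ℕ)}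
    (hm0 : m 0 = 0) {R : MvPolynomial (Fin s) K} {p : Ideal (MvPolynomial (Fin s) K)}
    (hY : ∀ j : Fin s, (∃ i, m i = Finsupp.single j 1) ∨ R = X j) :
    HypothesisH K p m R ↔ ¬ Algebra.IsIntegral K (MvPolynomial (Fin s) K ⧸ p) := by
  rw [hypothesisH_iff, not_iff_not]
  refine ⟨fun ⟨hR, hQ⟩ ↦ ?_, fun h ↦ ⟨h.isIntegral _, fun i _ ↦ h.isIntegral _⟩⟩
  refine isIntegral_of_surjective_of_forall_isIntegral_X (Ideal.Quotient.mkₐ_surjective K p)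
    fun j ↦ ?_
  rcases hY j with ⟨i, hi⟩ | rfl
  · have hi0 : i ≠ 0 := by
      rintro rfl
      exact Finsupp.single_ne_zero.mpr one_ne_zero (hi.symm.trans hm0)
    have hQi := hQ i hi0
    rwa [hi] at hQi
  · exact hR

/-- If `p` is a non-maximal prime ideal of `K[Y]` and every variable
`Y_j` belongs to `S ∪ {R}`, then the triple `(p,S,R)` satisfies hypothesis (H). -/
theorem stmt_7 (K : Type) [Field K] (s n D : ℕ)
    (m : Fin (n + 1) → (Fin s →₀ ℕ)) (hdeg : ∀ i, (m i).degree ≤ D)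
    (hm0 : m 0 = 0) (hminj : Function.Injective m)
    (R : MvPolynomial (Fin s) K)
    (p : Ideal (MvPolynomial (Fin s) K)) (hp : p.IsPrime) (hpmax : ¬ p.IsMaximal)
    (hY : ∀ j : Fin s, (∃ i, m i = Finsupp.single j 1) ∨ R = MvPolynomial.X j) :
    HypothesisH K p m R := by
  rw [stmt_7_general hm0 hY]
  exact fun _ ↦ hpmax (isMaximal_of_isIntegral_quotient K p)

end
end

section
/- Let K be a field and p a non-maximal prime ideal of K[Y] such that the Krull dimension of K[Y]/p equals d > 0. Fix an integer ρ with 0 < ρ ≤ d and integers D_1,…,D_ρ ≥ 1, and let Q_{D_1}(Λ_1,Y),…,Q_{D_ρ}(Λ_ρ,Y) be the generic polynomials of degrees D_1,…,D_ρ in pairwise disjoint parameter tuples Λ_1,…,Λ_ρ; write ΛΛ = (Λ_1,…,Λ_ρ). Then the ideal P_ρ = ⟨p, Q_{D_1},…,Q_{D_ρ}⟩ of K[ΛΛ,Y] is prime, P_ρ ∩ K[ΛΛ] = {0}, and the extension P̃_ρ of P_ρ to K(ΛΛ)[Y] is a prime ideal such that K(ΛΛ)[Y]/P̃_ρ has Krull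 dimension d − ρ. -/
open MvPolynomial

noncomputable section

/-- The index type of the parameters `ΛΛ = (Λ_1,…,Λ_ρ)` of `ρ` generic polynomials of
degrees `D 1, …, D ρ` in `s` variables (the tuples being pairwise disjoint). -/
def LamIdx (s ρ : ℕ) (D : Fin ρ → ℕ) : Type := (i : Fin ρ) × MonLE s (D i)

/-!
Every `Q_{D_i}` contains its constant coefficient `Λ_{i,1}` linearly and with coefficient `1`, so
that modulo `P_ρ` this parameter is a polynomial in the others: `K[ΛΛ,Y] / P_ρ` is the polynomial
ring over `K[Y] / p` in the remaining parameters, and `P_ρ` is prime.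

For `P_ρ ∩ K[ΛΛ] = 0`, one has to see that the eliminated parameters are algebraically independent
over `K` of the remaining ones. As `ρ ≤ d`, there are coordinates `y_{j_1}, …, y_{j_ρ}` of
`K[Y] / p` which are algebraically independent over `K`; specializing the coefficient of `Y_{j_i}`
in `Q_{D_i}` to `-1` and the other remaining parameters to `0` turns the solution for `Λ_{i,1}` into
`y_{j_i}`, and algebraic independence lifts from such a specialization.

Finally the quotient of `K(ΛΛ)[Y]` by the extension of `P_ρ` is a localization of `K[ΛΛ,Y] / P_ρ`,
and its dimension is the transcendence degree of `K[ΛΛ,Y] / P_ρ` over `K[ΛΛ]`: it is `d` plus the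
number of remaining parameters, minus the number of all parameters, that is `d - ρ`.
-/

section Dimension

theorem ringKrullDim_eq_of_isIntegral {R S : Type*} [CommRing R] [CommRing S] [Algebra R S]
    [Algebra.IsIntegral R S] [FaithfulSMul R S] : ringKrullDim S = ringKrullDim R := by
  apply le_antisymm
  · exact Order.krullDim_le_of_strictMono (PrimeSpectrum.comap (algebraMap R S))
      fun P Q hPQ => Ideal.IsIntegral.comap_lt_comap (R := R) (I := P.asIdeal) (J := Q.asIdeal) hPQ
  · refine iSup_le fun l => ?_
    obtain ⟨⟨Q, _, _⟩⟩ := Ideal.nonempty_primesOver (S := S) (RelSeries.head l).asIdeal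
    obtain ⟨L, hL, -, -⟩ := Ideal.exists_ltSeries_of_hasGoingUp (S := S) l Q
    rw [← hL]
    exact le_iSup (fun p : LTSeries (PrimeSpectrum S) => (p.length : WithBot ℕ∞)) L

theorem ringKrullDim_eq_toENat_trdeg (F A : Type*) [Field F] [CommRing A] [IsDomain A]
    [Algebra F A] [Algebra.FiniteType F A] :
    ringKrullDim A = (Cardinal.toENat (Algebra.trdeg F A) : WithBot ℕ∞) := by
  obtain ⟨n, g, hg, hgint⟩ := exists_integral_inj_algHom_of_fg F A
  let _ := g.toRingHom.toAlgebra
  have : Algebra.IsIntegral (MvPolynomial (Fin n) F) A := ⟨hgint⟩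
  have : FaithfulSMul (MvPolynomial (Fin n) F) A :=
    (faithfulSMul_iff_algebraMap_injective _ _).2 hg
  have : IsScalarTower F (MvPolynomial (Fin n) F) A := IsScalarTower.of_algHom g
  have htrdeg : Cardinal.toENat (Algebra.trdeg F A) = n := by
    have := congrArg Cardinal.toENat (lift_trdeg_add_eq F (MvPolynomial (Fin n) F) A)
    simpa [trdeg_eq_zero, trdeg_of_isDomain] using this.symm
  rw [ringKrullDim_eq_of_isIntegral (R := MvPolynomial (Fin n) F), htrdeg,
    MvPolynomial.ringKrullDim_of_isNoetherianRing]
  simp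

theorem toENat_trdeg_eq_of_isAlgebraic {R A F A' : Type*} [CommRing R] [Nontrivial R]
    [CommRing A] [CommRing F] [CommRing A'] [IsDomain A'] [Algebra R A] [Algebra R F]
    [Algebra R A'] [Algebra A A'] [Algebra F A'] [IsScalarTower R A A'] [IsScalarTower R F A']
    [FaithfulSMul R A] [FaithfulSMul R F] [FaithfulSMul A A'] [FaithfulSMul F A']
    [Algebra.IsAlgebraic R F] [Algebra.IsAlgebraic A A'] :
    Cardinal.toENat (Algebra.trdeg F A') = Cardinal.toENat (Algebra.trdeg R A) := by
  have hA := congrArg Cardinal.toENat (lift_trdeg_add_eq R A A')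
  have hF := congrArg Cardinal.toENat (lift_trdeg_add_eq R F A')
  simp only [trdeg_eq_zero, Cardinal.lift_zero, Cardinal.toENat_lift, zero_add, add_zero] at hA hF
  rw [hF, hA]

theorem toENat_trdeg_mvPolynomial (R A τ : Type*) [CommRing R] [Nontrivial R] [CommRing A]
    [IsDomain A] [Algebra R A] [FaithfulSMul R A] :
    Cardinal.toENat (Algebra.trdeg R (MvPolynomial τ A)) =
      Cardinal.toENat (Algebra.trdeg R A) + ENat.card τ := by
  have := congrArg Cardinal.toENat (lift_trdeg_add_eq R A (MvPolynomial τ A))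
  simpa [ENat.card] using this.symm

theorem exists_algebraicIndependent_comp_of_le_trdeg {R A ι : Type*} [CommRing R] [Nontrivial R]
    [CommRing A] [IsDomain A] [Algebra R A] [FaithfulSMul R A] {x : ι → A}
    (hx : Algebra.adjoin R (Set.range x) = ⊤) {n : ℕ} (hn : n ≤ Algebra.trdeg R A) :
    ∃ j : Fin n → ι, AlgebraicIndependent R (x ∘ j) := by
  have : Algebra.IsAlgebraic (Algebra.adjoin R (Set.range x)) A :=
    ⟨fun a => isAlgebraic_algebraMap (⟨a, hx ▸ trivial⟩ : Algebra.adjoin R (Set.range x))⟩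
  obtain ⟨t, htx, ht⟩ := exists_isTranscendenceBasis_subset (R := R) (Set.range x)
  have hlift : Cardinal.lift (Cardinal.mk (Fin n)) ≤ Cardinal.lift (Cardinal.mk t) := by
    simpa [ht.cardinalMk_eq_trdeg] using hn
  obtain ⟨b⟩ := Cardinal.lift_mk_le'.1 hlift
  choose j hj using fun i => htx (b i).2
  exact ⟨j, by simpa only [Function.comp_def, hj] using ht.1.comp b b.injective⟩

end Dimension

section GenericFibre

attribute [local instance] MvPolynomial.algebraMvPolynomial

theorem disjoint_map_C_nonZeroDivisors {R σ : Type*} [CommRing R] [Nontrivial R]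
    {P : Ideal (MvPolynomial σ R)} (hP : P.comap C = ⊥) :
    Disjoint ((nonZeroDivisors R).map (C (σ := σ)) : Set (MvPolynomial σ R)) P := by
  rw [Set.disjoint_left]
  rintro _ ⟨r, hr, rfl⟩ hrP
  have hr0 : r ∈ P.comap C := hrP
  exact nonZeroDivisors.ne_zero hr (by simpa [hP] using hr0)

theorem faithfulSMul_quotient_of_comap_C_eq_bot {R σ : Type*} [CommRing R]
    {P : Ideal (MvPolynomial σ R)} (hP : P.comap C = ⊥) :
    FaithfulSMul R (MvPolynomial σ R ⧸ P) := by
  refine (faithfulSMul_iff_algebraMap_injective R _).2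
    ((injective_iff_map_eq_zero (algebraMap R (MvPolynomial σ R ⧸ P))).2 fun r hr => ?_)
  have hrP : r ∈ P.comap C := Ideal.mem_comap.2 (Ideal.Quotient.eq_zero_iff_mem.1 hr)
  simpa [hP] using hrP

variable {R F σ : Type*} [CommRing R] [IsDomain R] [Field F] [Algebra R F] [IsFractionRing R F]
  {P : Ideal (MvPolynomial σ R)}

theorem isPrime_map_fractionRing [P.IsPrime] (hP : P.comap C = ⊥) :
    (P.map (MvPolynomial.map (algebraMap R F))).IsPrime :=
  IsLocalization.isPrime_of_isPrime_disjoint ((nonZeroDivisors R).map C) _ P ‹_›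
    (disjoint_map_C_nonZeroDivisors hP)

theorem ringKrullDim_quotient_map_fractionRing [Finite σ] [P.IsPrime] (hP : P.comap C = ⊥) :
    ringKrullDim (MvPolynomial σ F ⧸ P.map (MvPolynomial.map (algebraMap R F))) =
      (Cardinal.toENat (Algebra.trdeg R (MvPolynomial σ R ⧸ P)) : WithBot ℕ∞) := by
  let P' := P.map (algebraMap (MvPolynomial σ R) (MvPolynomial σ F))
  have : P'.IsPrime := isPrime_map_fractionRing hP
  have : P'.LiesOver P := IsLocalization.liesOver_map_of_isPrime_disjoint
    ((nonZeroDivisors R).map C) (MvPolynomial σ F) (disjoint_map_C_nonZeroDivisors hP)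
  have : FaithfulSMul R (MvPolynomial σ R ⧸ P) := faithfulSMul_quotient_of_comap_C_eq_bot hP
  have : Algebra.IsAlgebraic R F := IsLocalization.isAlgebraic F (nonZeroDivisors R)
  have : Algebra.IsAlgebraic (MvPolynomial σ R ⧸ P) (MvPolynomial σ F ⧸ P') :=
    IsLocalization.isAlgebraic _ (Algebra.algebraMapSubmonoid (MvPolynomial σ R ⧸ P)
      ((nonZeroDivisors R).map (C (σ := σ))))
  rw [← toENat_trdeg_eq_of_isAlgebraic (F := F) (A' := MvPolynomial σ F ⧸ P')]
  exact ringKrullDim_eq_toENat_trdeg F (MvPolynomial σ F ⧸ P')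

end GenericFibre

section Independence

variable {R A B ι τ : Type*} [CommRing R] [CommRing A] [CommRing B] [Algebra R A] [Algebra R B]

theorem injective_of_constantCoeff_comp_C (φ : MvPolynomial τ A →+* MvPolynomial τ B)
    (hX : ∀ t, φ (X t) = X t)
    (hC : Function.Injective (constantCoeff.comp (φ.comp C))) : Function.Injective φ := by
  refine (injective_iff_map_eq_zero φ).2 fun F hF => ?_
  by_contra hF0
  -- A monomial of `φ F` coming from the monomial `n` of `F` is a multiple of `n`, so a minimal
  -- monomial of `F` cannot be cancelled by the others.
  obtain ⟨m, hm, hmin⟩ := F.support.exists_minimal (support_nonempty.2 hF0)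
  have hmonomial (n : τ →₀ ℕ) (a : A) : φ (monomial n a) = monomial n 1 * φ (C a) := by
    rw [monomial_eq, map_mul, mul_comm, monomial_eq, C_1, one_mul, map_finsuppProd]
    simp only [map_pow, hX]
  have hcoeff : coeff m (φ F) = constantCoeff (φ (C (coeff m F))) := by
    rw [F.as_sum, map_sum, coeff_sum, Finset.sum_eq_single_of_mem m hm, hmonomial,
      coeff_monomial_mul', ← F.as_sum]
    · simp [constantCoeff_eq]
    · intro n hn hnm
      rw [hmonomial, coeff_monomial_mul', if_neg fun hle => hnm (le_antisymm hle (hmin hn hle))]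
  have hFm : coeff m F = 0 := (injective_iff_map_eq_zero _).1 hC _ <| by
    simpa [hF] using hcoeff.symm
  exact mem_support_iff.1 hm hFm

theorem injective_of_eval_comp_C (φ : MvPolynomial τ A →ₐ[R] MvPolynomial τ B)
    (hX : ∀ t, φ (X t) = X t) (c : τ → R)
    (hC : Function.Injective fun a => eval (algebraMap R B ∘ c) (φ (C a))) :
    Function.Injective φ := by
  let translateB : MvPolynomial τ B →ₐ[B] MvPolynomial τ B :=
    aeval fun t => X t + C (algebraMap R B (c t))
  let translateA : MvPolynomial τ A →ₐ[A] MvPolynomial τ A :=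
    aeval fun t => X t + C (algebraMap R A (c t))
  let untranslateA : MvPolynomial τ A →ₐ[A] MvPolynomial τ A :=
    aeval fun t => X t - C (algebraMap R A (c t))
  have huntranslate (F : MvPolynomial τ A) : untranslateA (translateA F) = F := by
    have : untranslateA.comp translateA = AlgHom.id A _ := by
      ext t : 1
      simp [translateA, untranslateA, algHom_C]
    exact DFunLike.congr_fun this F
  have htranslate (F : MvPolynomial τ B) :
      constantCoeff (translateB F) = eval (algebraMap R B ∘ c) F := by
    have : (constantCoeff.comp (translateB : MvPolynomial τ B →+* MvPolynomial τ B)) =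
        eval (algebraMap R B ∘ c) := by
      ext <;> simp [translateB, algHom_C]
    exact DFunLike.congr_fun this F
  let ψ : MvPolynomial τ A →+* MvPolynomial τ B :=
    (translateB : MvPolynomial τ B →+* MvPolynomial τ B).comp
      ((φ : MvPolynomial τ A →+* MvPolynomial τ B).comp
        (untranslateA : MvPolynomial τ A →+* MvPolynomial τ A))
  have hψ : Function.Injective ψ := by
    refine injective_of_constantCoeff_comp_C ψ (fun t => ?_) fun a b hab => hC ?_
    · have hφc : φ (C (algebraMap R A (c t))) = C (algebraMap R B (c t)) := φ.commutes (c t)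
      simp [ψ, untranslateA, translateB, hX, hφc, algHom_C]
    · simpa [ψ, untranslateA, algHom_C, htranslate] using hab
  intro F G hFG
  have : translateA F = translateA G := hψ <| by simp [ψ, huntranslate, hFG]
  simpa [huntranslate] using congrArg untranslateA this

theorem algebraicIndependent_sumElim_X (f : ι → MvPolynomial τ B) (c : τ → R)
    (hf : AlgebraicIndependent R fun i => eval (algebraMap R B ∘ c) (f i)) :
    AlgebraicIndependent R (Sum.elim X f : τ ⊕ ι → MvPolynomial τ B) := by
  let φ := (aeval (Sum.elim X f : τ ⊕ ι → MvPolynomial τ B)).comp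
    (sumAlgEquiv R τ ι).symm.toAlgHom
  have hφC (p : MvPolynomial ι R) :
      eval (algebraMap R B ∘ c) (φ (C p)) = aeval (fun i => eval (algebraMap R B ∘ c) (f i)) p := by
    induction p using MvPolynomial.induction_on with
    | C r => simp [φ]
    | add p q hp hq => simp only [map_add, hp, hq]
    | mul_X p i hp => rw [map_mul, map_mul, map_mul, hp]; simp [φ]
  have hφ : Function.Injective φ := by
    refine injective_of_eval_comp_C φ (fun t => by simp [φ]) c fun p q hpq => hf ?_
    simpa only [hφC] using hpq
  intro p q hpq
  exact (sumAlgEquiv R τ ι).injective (hφ (by simpa [φ] using hpq))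

end Independence

section Elimination

theorem ker_aeval_sumElim_X {B ι τ : Type*} [CommRing B] (f : ι → MvPolynomial τ B) :
    RingHom.ker (aeval (R := B) (Sum.elim X f)) =
      Ideal.span (Set.range fun i => X (Sum.inr i) - rename Sum.inl (f i)) := by
  set I := Ideal.span (Set.range fun i : ι => X (Sum.inr i) - rename (Sum.inl : τ → τ ⊕ ι) (f i))
  refine le_antisymm (fun F hF => ?_) (Ideal.span_le.2 ?_)
  · have hmk : (Ideal.Quotient.mkₐ B I).comp ((rename Sum.inl).comp (aeval (Sum.elim X f))) =
        Ideal.Quotient.mkₐ B I := by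
      ext (t | i)
      · simp
      · have hi : X (Sum.inr i) - rename Sum.inl (f i) ∈ I := Ideal.subset_span ⟨i, rfl⟩
        simpa using (Ideal.Quotient.eq.2 hi).symm
    rw [← Ideal.Quotient.eq_zero_iff_mem, ← Ideal.Quotient.mkₐ_eq_mk B, ← hmk, AlgHom.comp_apply,
      AlgHom.comp_apply, (RingHom.mem_ker).1 hF, map_zero, map_zero]
  · rintro _ ⟨i, rfl⟩
    rw [SetLike.mem_coe, RingHom.mem_ker, map_sub, aeval_X, aeval_rename, Sum.elim_comp_inl,
      aeval_X_left_apply, Sum.elim_inr, sub_self]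

theorem commAlgEquiv_map_C {R σ τ : Type*} [CommSemiring R] (F : MvPolynomial σ R) :
    commAlgEquiv R σ τ (map C F) = C F := by
  induction F using MvPolynomial.induction_on with
  | C r => simp
  | add F G hF hG => simp only [map_add, hF, hG]
  | mul_X F i hF => simp only [map_mul, hF, map_X, commAlgEquiv_X]

theorem ker_mapAlgHom_comp_commAlgEquiv {R B σ τ : Type*} [CommRing R] [CommRing B] [Algebra R B]
    (π : MvPolynomial σ R →ₐ[R] B) :
    RingHom.ker ((mapAlgHom π).comp (commAlgEquiv R σ τ).toAlgHom) =
      (RingHom.ker π).map (map C) := by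
  let swap : MvPolynomial σ (MvPolynomial τ R) →+* MvPolynomial τ (MvPolynomial σ R) :=
    commAlgEquiv R σ τ
  have hC : swap.comp (map C) = C := RingHom.ext fun F => commAlgEquiv_map_C F
  calc RingHom.ker ((mapAlgHom π).comp (commAlgEquiv R σ τ).toAlgHom)
      = (RingHom.ker (mapAlgHom (σ := τ) π)).comap swap := rfl
    _ = (((RingHom.ker π).map (map C)).map swap).comap swap := by
        rw [ker_mapAlgHom, Ideal.map_map, hC]
    _ = (RingHom.ker π).map (map C) :=
        Ideal.comap_map_of_bijective swap (commAlgEquiv R σ τ).bijective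

end Elimination

section ParameterSplitting

variable {R σ ι : Type*} [CommRing R] {α : ι → Type*}

/-- The parameters `Λᵢₘ` with `m ≠ m₀ i`. -/
abbrev FreeParam (m₀ : ∀ i, α i) : Type _ := Σ i, {m : α i // m ≠ m₀ i}

/-- The parameters `Λᵢₘ` split into the free ones and the `Λᵢₘ` with `m = m₀ i`, which are
indexed by `i` alone. -/
def freeParamSumEquiv (m₀ : ∀ i, α i) : FreeParam m₀ ⊕ ι ≃ Σ i, α i :=
  Equiv.ofBijective (Sum.elim (fun x => ⟨x.1, x.2.1⟩) fun i => ⟨i, m₀ i⟩) <| by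
    refine ⟨Function.Injective.sumElim ?_ ?_ ?_, ?_⟩
    · rintro ⟨i, m, hm⟩ ⟨j, n, hn⟩ h
      cases h
      rfl
    · exact fun i j h => congrArg Sigma.fst h
    · rintro ⟨i, m, hm⟩ j h
      obtain ⟨rfl, h⟩ := Sigma.mk.inj_iff.1 h
      exact hm (eq_of_heq h)
    · rintro ⟨i, m⟩
      by_cases hm : m = m₀ i
      · exact ⟨.inr i, by rw [hm]; rfl⟩
      · exact ⟨.inl ⟨i, m, hm⟩, rfl⟩

theorem freeParamSumEquiv_symm_of_ne (m₀ : ∀ i, α i) (i : ι) (m : {m : α i // m ≠ m₀ i}) :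
    (freeParamSumEquiv m₀).symm ⟨i, m⟩ = .inl ⟨i, m⟩ :=
  (Equiv.symm_apply_eq _).2 rfl

theorem freeParamSumEquiv_symm_self (m₀ : ∀ i, α i) (i : ι) :
    (freeParamSumEquiv m₀).symm ⟨i, m₀ i⟩ = .inr i :=
  (Equiv.symm_apply_eq _).2 rfl

/-- Reduction modulo `p` of the coefficients of a polynomial of `R[Λ][Y]`, viewed as a polynomial
in the parameters `Λ` with coefficients in `R[Y]`. -/
def reduceParams (p : Ideal (MvPolynomial σ R)) (m₀ : ∀ i, α i) :
    MvPolynomial σ (MvPolynomial (Σ i, α i) R) →ₐ[R]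
      MvPolynomial (FreeParam m₀ ⊕ ι) (MvPolynomial σ R ⧸ p) :=
  ((renameEquiv (MvPolynomial σ R ⧸ p)
    (freeParamSumEquiv m₀).symm).toAlgHom.restrictScalars R).comp
    ((mapAlgHom (Ideal.Quotient.mkₐ R p)).comp (commAlgEquiv R σ (Σ i, α i)).toAlgHom)

theorem reduceParams_surjective (p : Ideal (MvPolynomial σ R)) (m₀ : ∀ i, α i) :
    Function.Surjective (reduceParams p m₀) :=
  (renameEquiv _ _).surjective.comp <|
    (map_surjective _ Ideal.Quotient.mk_surjective).comp (commAlgEquiv _ _ _).surjective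

theorem ker_reduceParams (p : Ideal (MvPolynomial σ R)) (m₀ : ∀ i, α i) :
    RingHom.ker (reduceParams p m₀) = p.map (map C) := by
  have hker := ker_mapAlgHom_comp_commAlgEquiv (τ := Σ i, α i) (Ideal.Quotient.mkₐ R p)
  rw [show RingHom.ker (Ideal.Quotient.mkₐ R p) = p from Ideal.Quotient.mkₐ_ker R p] at hker
  rw [← hker]
  ext F
  exact map_eq_zero_iff _ (renameEquiv (MvPolynomial σ R ⧸ p) (freeParamSumEquiv m₀).symm).injective

end ParameterSplitting

section GenericMember

variable {R σ ι : Type*} [CommRing R] {α : ι → Type*} [∀ i, Fintype (α i)]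

/-- The generic member `∑ₘ Λᵢₘ eᵢₘ` of the `i`-th of a family of linear systems of polynomials,
the `i`-th one being spanned by `e i`. The `Λᵢₘ` are independent variables, so that distinct
systems have disjoint tuples of parameters. -/
def genericMember (e : ∀ i, α i → MvPolynomial σ R) (i : ι) :
    MvPolynomial σ (MvPolynomial (Σ i, α i) R) :=
  ∑ m, C (X ⟨i, m⟩) * map C (e i m)

/-- The ideal of `R[Λ][Y]` generated by an ideal `p` of `R[Y]` and by the generic members of the
linear systems spanned by the families `e i`. -/
def genericIdeal (p : Ideal (MvPolynomial σ R)) (e : ∀ i, α i → MvPolynomial σ R) :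
    Ideal (MvPolynomial σ (MvPolynomial (Σ i, α i) R)) :=
  p.map (map C) ⊔ Ideal.span (Set.range (genericMember e))

open Classical in
/-- If `e i (m₀ i) = 1`, the equation `∑ₘ Λᵢₘ eᵢₘ = 0` can be solved for the parameter `Λᵢₘ` with
`m = m₀ i`; this is the solution, with coefficients taken modulo `p`. -/
def solvedParam (p : Ideal (MvPolynomial σ R)) (e : ∀ i, α i → MvPolynomial σ R)
    (m₀ : ∀ i, α i) (i : ι) : MvPolynomial (FreeParam m₀) (MvPolynomial σ R ⧸ p) :=
  -∑ m : {m : α i // m ≠ m₀ i}, C (Ideal.Quotient.mk p (e i m)) * X ⟨i, m⟩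

/-- Elimination of the parameters `Λᵢₘ` with `m = m₀ i` from the polynomials in `R[Λ][Y]` by means
of the equations `∑ₘ Λᵢₘ eᵢₘ = 0` (see `solvedParam`). -/
def elimParams (p : Ideal (MvPolynomial σ R)) (e : ∀ i, α i → MvPolynomial σ R) (m₀ : ∀ i, α i) :
    MvPolynomial σ (MvPolynomial (Σ i, α i) R) →ₐ[R]
      MvPolynomial (FreeParam m₀) (MvPolynomial σ R ⧸ p) :=
  ((aeval (Sum.elim X (solvedParam p e m₀))).restrictScalars R).comp (reduceParams p m₀)

variable (p : Ideal (MvPolynomial σ R)) {e : ∀ i, α i → MvPolynomial σ R} {m₀ : ∀ i, α i}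

theorem elimParams_surjective : Function.Surjective (elimParams p e m₀) :=
  have haeval : Function.Surjective
      (aeval (R := MvPolynomial σ R ⧸ p) (Sum.elim X (solvedParam p e m₀))) := fun F =>
    ⟨rename Sum.inl F, by rw [aeval_rename, Sum.elim_comp_inl, aeval_X_left_apply]⟩
  haeval.comp (reduceParams_surjective p m₀)

theorem reduceParams_genericMember (hm₀ : ∀ i, e i (m₀ i) = 1) (i : ι) :
    reduceParams p m₀ (genericMember e i) =
      X (Sum.inr i) - rename Sum.inl (solvedParam p e m₀ i) := by
  classical
  rw [genericMember, Fintype.sum_eq_add_sum_subtype_ne _ (m₀ i)]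
  simp [reduceParams, solvedParam, commAlgEquiv_map_C, hm₀, mapAlgHom_apply,
    freeParamSumEquiv_symm_of_ne, freeParamSumEquiv_symm_self, mul_comm]

theorem ker_elimParams (hm₀ : ∀ i, e i (m₀ i) = 1) :
    RingHom.ker (elimParams p e m₀) = genericIdeal p e :=
  calc RingHom.ker (elimParams p e m₀)
      = (RingHom.ker (aeval (R := MvPolynomial σ R ⧸ p)
          (Sum.elim X (solvedParam p e m₀)))).comap (reduceParams p m₀) := rfl
    _ = ((Ideal.span (Set.range (genericMember e))).map (reduceParams p m₀)).comap
          (reduceParams p m₀) := by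
        rw [ker_aeval_sumElim_X, Ideal.map_span, ← Set.range_comp]
        simp only [Function.comp_def, reduceParams_genericMember p hm₀]
    _ = genericIdeal p e := by
        rw [Ideal.comap_map_of_surjective _ (reduceParams_surjective p m₀), sup_comm,
          genericIdeal, ← ker_reduceParams p m₀]
        rfl

theorem isPrime_genericIdeal [p.IsPrime] (hm₀ : ∀ i, e i (m₀ i) = 1) :
    (genericIdeal p e).IsPrime :=
  ker_elimParams p hm₀ ▸ RingHom.ker_isPrime _

/-- Modulo the generic ideal, the parameters `Λᵢₘ` with `m = m₀ i` are determined by the others,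
which remain independent over `R[Y] ⧸ p`. -/
def quotientGenericIdealEquiv (hm₀ : ∀ i, e i (m₀ i) = 1) :
    (MvPolynomial σ (MvPolynomial (Σ i, α i) R) ⧸ genericIdeal p e) ≃ₐ[R]
      MvPolynomial (FreeParam m₀) (MvPolynomial σ R ⧸ p) :=
  (Ideal.quotientEquivAlgOfEq R (ker_elimParams p hm₀).symm).trans
    (Ideal.quotientKerAlgEquivOfSurjective (elimParams_surjective p))

theorem elimParams_C (F : MvPolynomial (Σ i, α i) R) :
    elimParams p e m₀ (C F) =
      aeval (Sum.elim X (solvedParam p e m₀) ∘ (freeParamSumEquiv m₀).symm) F := by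
  induction F using MvPolynomial.induction_on with
  | C r => simp [elimParams, reduceParams]
  | add F G hF hG => simp only [map_add, hF, hG]
  | mul_X F i hF => rw [map_mul, map_mul, map_mul, hF]; simp [elimParams, reduceParams]

open Classical in
theorem exists_eval_solvedParam_eq {n : ∀ i, α i} (hn : ∀ i, n i ≠ m₀ i) :
    ∃ c : FreeParam m₀ → R, ∀ i,
      eval (algebraMap R (MvPolynomial σ R ⧸ p) ∘ c) (solvedParam p e m₀ i) =
        Ideal.Quotient.mk p (e i (n i)) := by
  refine ⟨fun x => if x.2.1 = n x.1 then -1 else 0, fun i => ?_⟩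
  rw [solvedParam, map_neg, map_sum, Finset.sum_eq_single (⟨n i, hn i⟩ : {m // m ≠ m₀ i})]
  · rw [map_mul, eval_C, eval_X, Function.comp_apply, if_pos rfl, map_neg, map_one]
    ring
  · intro m _ hm
    simp [Subtype.ext_iff.not.1 hm]
  · simp

theorem algebraicIndependent_sumElim_solvedParam [Nontrivial R] (hm₀ : ∀ i, e i (m₀ i) = 1)
    {n : ∀ i, α i} (hn : AlgebraicIndependent R fun i => Ideal.Quotient.mk p (e i (n i))) :
    AlgebraicIndependent R (Sum.elim X (solvedParam p e m₀)) := by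
  have hnm (i : ι) : n i ≠ m₀ i := fun h =>
    hn.transcendental i (by simpa [h, hm₀] using isAlgebraic_one)
  obtain ⟨c, hc⟩ := exists_eval_solvedParam_eq p (e := e) hnm
  exact algebraicIndependent_sumElim_X _ c (by simpa only [hc] using hn)

theorem comap_C_genericIdeal [Nontrivial R] (hm₀ : ∀ i, e i (m₀ i) = 1) {n : ∀ i, α i}
    (hn : AlgebraicIndependent R fun i => Ideal.Quotient.mk p (e i (n i))) :
    (genericIdeal p e).comap C = ⊥ := by
  have hind := (algebraicIndependent_sumElim_solvedParam p hm₀ hn).comp _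
    (freeParamSumEquiv m₀).symm.injective
  refine eq_bot_iff.2 fun F hF => hind ?_
  rw [Ideal.mem_comap, ← ker_elimParams p hm₀, RingHom.mem_ker, elimParams_C] at hF
  rw [hF, map_zero]

end GenericMember

section GenericTrdeg

variable {R σ ι : Type*} [CommRing R] [IsDomain R] {α : ι → Type*} [∀ i, Fintype (α i)] [Finite ι]
  {p : Ideal (MvPolynomial σ R)} [p.IsPrime]
  {e : ∀ i, α i → MvPolynomial σ R} {m₀ : ∀ i, α i}

theorem toENat_trdeg_quotient_genericIdeal_add_card [FaithfulSMul R (MvPolynomial σ R ⧸ p)]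
    (hm₀ : ∀ i, e i (m₀ i) = 1) (hP : (genericIdeal p e).comap C = ⊥) :
    Cardinal.toENat (Algebra.trdeg (MvPolynomial (Σ i, α i) R)
      (MvPolynomial σ (MvPolynomial (Σ i, α i) R) ⧸ genericIdeal p e)) + ENat.card ι =
      Cardinal.toENat (Algebra.trdeg R (MvPolynomial σ R ⧸ p)) := by
  let Λ := Σ i, α i
  let Q := MvPolynomial σ (MvPolynomial Λ R) ⧸ genericIdeal p e
  let B := MvPolynomial σ R ⧸ p
  have : (genericIdeal p e).IsPrime := isPrime_genericIdeal p hm₀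
  have : FaithfulSMul (MvPolynomial Λ R) Q := faithfulSMul_quotient_of_comap_C_eq_bot hP
  have htower : ENat.card Λ + Cardinal.toENat (Algebra.trdeg (MvPolynomial Λ R) Q) =
      Cardinal.toENat (Algebra.trdeg R Q) := by
    simpa [ENat.card] using
      congrArg Cardinal.toENat (lift_trdeg_add_eq R (MvPolynomial Λ R) Q)
  have hfree : Cardinal.toENat (Algebra.trdeg R Q) =
      Cardinal.toENat (Algebra.trdeg R B) + ENat.card (FreeParam m₀) := by
    let q : Q ≃ₐ[R] MvPolynomial (FreeParam m₀) B := quotientGenericIdealEquiv p hm₀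
    rw [← toENat_trdeg_mvPolynomial]
    simpa only [Cardinal.toENat_lift] using congrArg Cardinal.toENat q.lift_trdeg_eq
  have hcard : ENat.card Λ = ENat.card (FreeParam m₀) + ENat.card ι := by
    rw [← ENat.card_congr (freeParamSumEquiv m₀), ENat.card_sum]
  refine ENat.add_right_injective_of_ne_top
    (ENat.card_lt_top.2 (inferInstance : Finite (FreeParam m₀))).ne ?_
  change ENat.card (FreeParam m₀) +
    (Cardinal.toENat (Algebra.trdeg (MvPolynomial Λ R) Q) + ENat.card ι) =
      ENat.card (FreeParam m₀) + Cardinal.toENat (Algebra.trdeg R B)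
  rw [add_comm _ (ENat.card ι), ← add_assoc, ← hcard, htower, hfree, add_comm]

end GenericTrdeg

section GenericFibreDimension

variable {K σ ι : Type*} [Field K] [Finite σ] {p : Ideal (MvPolynomial σ K)} [p.IsPrime]

theorem ringKrullDim_genericFibre_add_card {α : ι → Type*} [∀ i, Fintype (α i)] [Finite ι]
    {e : ∀ i, α i → MvPolynomial σ K} {m₀ : ∀ i, α i} (F : Type*) [Field F]
    [Algebra (MvPolynomial (Σ i, α i) K) F] [IsFractionRing (MvPolynomial (Σ i, α i) K) F]
    (hm₀ : ∀ i, e i (m₀ i) = 1) (hP : (genericIdeal p e).comap C = ⊥) :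
    ringKrullDim (MvPolynomial σ F ⧸ (genericIdeal p e).map (map (algebraMap _ F))) +
      (Nat.card ι : WithBot ℕ∞) = ringKrullDim (MvPolynomial σ K ⧸ p) := by
  have : (genericIdeal p e).IsPrime := isPrime_genericIdeal p hm₀
  rw [ringKrullDim_quotient_map_fractionRing hP, ringKrullDim_eq_toENat_trdeg K,
    ← toENat_trdeg_quotient_genericIdeal_add_card hm₀ hP, WithBot.coe_add,
    ENat.card_eq_coe_natCard]
  rfl

theorem exists_algebraicIndependent_mk_X {n : ℕ}
    (hn : (n : WithBot ℕ∞) ≤ ringKrullDim (MvPolynomial σ K ⧸ p)) :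
    ∃ j : Fin n → σ, AlgebraicIndependent K fun i => Ideal.Quotient.mk p (X (j i)) := by
  have hgen : Algebra.adjoin K (Set.range fun i => Ideal.Quotient.mk p (X i)) = ⊤ := by
    have := congrArg (Subalgebra.map (Ideal.Quotient.mkₐ K p)) (adjoin_range_X (R := K) (σ := σ))
    rwa [AlgHom.map_adjoin, ← Set.range_comp, Algebra.map_top, (AlgHom.range_eq_top _).2
      (Ideal.Quotient.mkₐ_surjective K p)] at this
  have : FaithfulSMul K (MvPolynomial σ K ⧸ p) :=
    (faithfulSMul_iff_algebraMap_injective K (MvPolynomial σ K ⧸ p)).2 (algebraMap K _).injective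
  refine exists_algebraicIndependent_comp_of_le_trdeg hgen ?_
  rw [ringKrullDim_eq_toENat_trdeg K] at hn
  exact Cardinal.natCast_le_toENat.1 (by exact_mod_cast hn)

end GenericFibreDimension

section GenericPolynomial

/-- The monomials of degree at most `D`, viewed as the spanning family of a linear system. -/
def monomialLE (K : Type*) [CommSemiring K] (s D : ℕ) (m : MonLE s D) : MvPolynomial (Fin s) K :=
  monomial m.1 1

/-- The monomial `1`. -/
def MonLE.one (s D : ℕ) : MonLE s D := ⟨0, by simp⟩

/-- The monomial `Yⱼ`. -/
def MonLE.single {s D : ℕ} (hD : 1 ≤ D) (j : Fin s) : MonLE s D :=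
  ⟨Finsupp.single j 1, by simpa using hD⟩

theorem genPoly_eq_genericMember (K : Type) [Field K] {s ρ : ℕ} (D : Fin ρ → ℕ) (i : Fin ρ) :
    genPoly K s (D i) (fun m => (⟨i, m⟩ : Σ i, MonLE s (D i))) =
      genericMember (fun i => monomialLE K s (D i)) i :=
  Finset.sum_congr rfl fun m _ => by
    simp only [monomialLE, map_monomial, C_mul_monomial, map_one, mul_one]

theorem map_sup_span_genPoly {K : Type} [Field K] {s ρ : ℕ} (p : Ideal (MvPolynomial (Fin s) K))
    (D : Fin ρ → ℕ) :
    p.map (map C) ⊔ Ideal.span (Set.range fun i : Fin ρ =>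
      genPoly K s (D i) fun m => (⟨i, m⟩ : Σ i, MonLE s (D i))) =
      genericIdeal p fun i => monomialLE K s (D i) := by
  simp only [genPoly_eq_genericMember]
  rfl

theorem comap_C_genericIdeal_monomialLE {K : Type} [Field K] {s ρ : ℕ}
    {p : Ideal (MvPolynomial (Fin s) K)} [p.IsPrime] {D : Fin ρ → ℕ} (hD : ∀ i, 1 ≤ D i)
    (hρ : (ρ : WithBot ℕ∞) ≤ ringKrullDim (MvPolynomial (Fin s) K ⧸ p)) :
    (genericIdeal p fun i => monomialLE K s (D i)).comap C = ⊥ := by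
  obtain ⟨j, hj⟩ := exists_algebraicIndependent_mk_X hρ
  exact comap_C_genericIdeal p (m₀ := fun i => .one s (D i)) (fun _ => rfl)
    (n := fun i => .single (hD i) (j i)) hj

end GenericPolynomial

/-- If `p ⊆ K[Y]` is a non-maximal prime with `dim K[Y]/p = d > 0` and
`Q_{D_1},…,Q_{D_ρ}` (`0 < ρ ≤ d`, `D_i ≥ 1`) are generic polynomials in pairwise disjoint
parameter tuples, then `P_ρ = ⟨p, Q_{D_1},…,Q_{D_ρ}⟩ ⊆ K[ΛΛ,Y]` is prime,
`P_ρ ∩ K[ΛΛ] = 0`, and the extension of `P_ρ` to `K(ΛΛ)[Y]` is prime with quotient of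
Krull dimension `d − ρ`. -/
theorem stmt_8 (K : Type) [Field K] (s : ℕ)
    (p : Ideal (MvPolynomial (Fin s) K)) (hp : p.IsPrime) (hpmax : ¬ p.IsMaximal)
    (d : ℕ) (hd0 : 0 < d)
    (hd : ringKrullDim (MvPolynomial (Fin s) K ⧸ p) = (d : WithBot ℕ∞))
    (ρ : ℕ) (hρ0 : 0 < ρ) (hρd : ρ ≤ d) (D : Fin ρ → ℕ) (hD : ∀ i, 1 ≤ D i) :
    (Ideal.map (MvPolynomial.map (MvPolynomial.C : K →+* MvPolynomial (LamIdx s ρ D) K)) p ⊔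
      Ideal.span (Set.range fun i : Fin ρ =>
        genPoly K s (D i) (fun mo => (⟨i, mo⟩ : LamIdx s ρ D)))).IsPrime ∧
    (∀ g : MvPolynomial (LamIdx s ρ D) K,
      MvPolynomial.C g ∈
        Ideal.map (MvPolynomial.map (MvPolynomial.C : K →+* MvPolynomial (LamIdx s ρ D) K)) p ⊔
          Ideal.span (Set.range fun i : Fin ρ =>
            genPoly K s (D i) (fun mo => (⟨i, mo⟩ : LamIdx s ρ D))) → g = 0) ∧
    (Ideal.map
      (MvPolynomial.map (algebraMap (MvPolynomial (LamIdx s ρ D) K) (RatFuncField K (LamIdx s ρ D))))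
      (Ideal.map (MvPolynomial.map (MvPolynomial.C : K →+* MvPolynomial (LamIdx s ρ D) K)) p ⊔
        Ideal.span (Set.range fun i : Fin ρ =>
          genPoly K s (D i) (fun mo => (⟨i, mo⟩ : LamIdx s ρ D))))).IsPrime ∧
    ringKrullDim (MvPolynomial (Fin s) (RatFuncField K (LamIdx s ρ D)) ⧸
      Ideal.map
        (MvPolynomial.map (algebraMap (MvPolynomial (LamIdx s ρ D) K) (RatFuncField K (LamIdx s ρ D))))
        (Ideal.map (MvPolynomial.map (MvPolynomial.C : K →+* MvPolynomial (LamIdx s ρ D) K)) p ⊔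
          Ideal.span (Set.range fun i : Fin ρ =>
            genPoly K s (D i) (fun mo => (⟨i, mo⟩ : LamIdx s ρ D))))) =
      ((d - ρ : ℕ) : WithBot ℕ∞) := by
  have hone (i : Fin ρ) : monomialLE K s (D i) (.one s (D i)) = 1 := rfl
  have hprime := isPrime_genericIdeal p hone
  have hcomap := comap_C_genericIdeal_monomialLE (p := p) hD (by rw [hd]; exact_mod_cast hρd)
  have hdim := ringKrullDim_genericFibre_add_card (RatFuncField K (Σ i, MonLE s (D i))) hone hcomap
  unfold LamIdx
  rw [map_sup_span_genPoly]
  refine ⟨hprime, fun g hg => ?_, isPrime_map_fractionRing hcomap, ?_⟩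
  · rwa [← Ideal.mem_comap, hcomap] at hg
  · rw [Nat.card_fin, hd, ← Nat.sub_add_cancel hρd, Nat.cast_add] at hdim
    exact ENat.WithBot.add_natCast_cancel.1 hdim

end
end
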